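/- Let d ∈ {2,3}, let Ω ⊂ ℝ^d be a bounded convex polytope, let p ∈ (1,∞), and let ω be an A_p weight, with p' = p/(p−1) and ω' = ω^{−1/(p−1)}. Let B : Ω̄ → ℝ^{d×d} be a C^∞ symmetric matrix-valued map with αI ⪯ B(x) for all x, for some α > 0. Suppose there is C₀ > 0 such that for every Ψ ∈ C_c^∞(Ω) there exists w ∈ W^{1,p'}_0(ω',Ω) with ∫_Ω B∇w·∇φ dx = ∫_Ω Ψ φ dx for all φ ∈ C_c^∞(Ω) and ‖∇w‖_{L^{p'}(ω',Ω)} ≤ C₀ ‖Ψ‖_{L^{p'}(ω',Ω)}. Then every v ∈ W^{1,p}_0(ω,Ω) satisfying ∫_Ω B∇v·∇φ dx = ⟨Φ,φ⟩ for all φ ∈ C_c^∞(Ω), for some Φ ∈ W^{−1,p}(ω,Ω), obeys ‖v‖_{L^p(ω,Ω)} ≤ C₀ ‖Φ‖_{W^{−1,p}(ω,Ω)}. -/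

import Mathlib

/-!
The proof is the classical duality argument. Write `σ = ω' = ω^{-1/(p-1)}` and `q = p' = p/(p-1)`.
Since `ω^{1/p} σ^{1/q} = 1`, Hölder's inequality (`weighted_holder`) makes `∫ v Ψ` and
`∫ B∇v·∇w` continuous on `L^p(ω) × L^q(σ)`; the coefficient `B` is bounded because it is continuous
on the compact set `closure Ω`.

Given a test function `Ψ`, let `w` solve the adjoint problem. Approximating `v` by test functions
in the equation of `w` gives `∫ v Ψ = ∫ B∇v·∇w` (by symmetry of `B`), and approximating `w` by
test functions in the equation of `v` gives `∫ B∇v·∇w ≤ ‖Φ‖ ‖∇w‖ ≤ C₀ ‖Φ‖ ‖Ψ‖`. The conclusion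
follows by testing with smooth approximations of cut-offs of the extremal function
`v |v|^{p-2} ω` (`wN_le_of_forall_test`).

The condition `IsAp` is phrased with Bochner integrals, which vanish on non-integrable functions, so
it does not by itself give local integrability of `σ`. That property is instead extracted from the
solvability of the adjoint problem: if `|Ψ|^q σ` were not integrable, the a priori bound would read
`‖∇w‖ ≤ 0`, whence `∫ Ψ² = 0` (`integrable_of_adjoint`). Thus `σ` is integrable on compact subsets
of `Ω`, which suffices since all test functions are compactly supported in `Ω`.
-/

open MeasureTheory Filter
open scoped RealInnerProductSpace Topology

noncomputable section

/-- Euclidean space `ℝ^d`. -/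
abbrev Euc (d : ℕ) := EuclideanSpace ℝ (Fin d)

/-- The weighted norm `‖f‖_{L^p(ω,Ω)} = (∫_Ω |f|^p ω dx)^{1/p}` of a scalar function. -/
def wNorm {d : ℕ} (p : ℝ) (ω : Euc d → ℝ) (Ω : Set (Euc d)) (f : Euc d → ℝ) : ℝ :=
  (∫ x in Ω, |f x| ^ p * ω x) ^ (1 / p)

/-- The weighted norm `‖F‖_{L^p(ω,Ω)} = (∫_Ω ‖F‖^p ω dx)^{1/p}` of a vector field. -/
def wNormV {d : ℕ} (p : ℝ) (ω : Euc d → ℝ) (Ω : Set (Euc d)) (F : Euc d → Euc d) : ℝ :=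
  (∫ x in Ω, ‖F x‖ ^ p * ω x) ^ (1 / p)

/-- Membership `f ∈ L^p(ω,Ω)` for a scalar function. -/
def MemWLp {d : ℕ} (p : ℝ) (ω : Euc d → ℝ) (Ω : Set (Euc d)) (f : Euc d → ℝ) : Prop :=
  AEStronglyMeasurable f (volume.restrict Ω) ∧
    IntegrableOn (fun x => |f x| ^ p * ω x) Ω volume

/-- Membership `F ∈ L^p(ω,Ω)^d` for a vector field. -/
def MemWLpV {d : ℕ} (p : ℝ) (ω : Euc d → ℝ) (Ω : Set (Euc d)) (F : Euc d → Euc d) : Prop :=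
  AEStronglyMeasurable F (volume.restrict Ω) ∧
    IntegrableOn (fun x => ‖F x‖ ^ p * ω x) Ω volume

/-- `ω` is a weight: locally integrable and positive almost everywhere. -/
def IsWeight {d : ℕ} (ω : Euc d → ℝ) : Prop :=
  LocallyIntegrable ω volume ∧ ∀ᵐ x ∂(volume : Measure (Euc d)), 0 < ω x

/-- The Muckenhoupt `A_p` quantity of `ω` is bounded by `M` over every Euclidean ball:
`(⨍_B ω)(⨍_B ω^{-1/(p-1)})^{p-1} ≤ M`. -/
def APBound {d : ℕ} (p : ℝ) (ω : Euc d → ℝ) (M : ℝ) : Prop :=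
  ∀ (z : Euc d) (r : ℝ), 0 < r →
    (((volume (Metric.ball z r)).toReal)⁻¹ * ∫ x in Metric.ball z r, ω x) *
      (((volume (Metric.ball z r)).toReal)⁻¹ *
        ∫ x in Metric.ball z r, ω x ^ (-(1 / (p - 1)))) ^ (p - 1) ≤ M

/-- `ω` belongs to the Muckenhoupt class `A_p`:
it is a weight with finite Muckenhoupt characteristic. -/
def IsAp {d : ℕ} (p : ℝ) (ω : Euc d → ℝ) : Prop :=
  IsWeight ω ∧ ∃ M : ℝ, APBound p ω M

/-- The dual weight `ω' = ω^{-1/(p-1)}`. -/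
def dualWeight {d : ℕ} (p : ℝ) (ω : Euc d → ℝ) : Euc d → ℝ :=
  fun x => ω x ^ (-(1 / (p - 1)))

/-- Test functions on `Ω`: smooth functions compactly supported inside `Ω`. -/
def TestFun {d : ℕ} (Ω : Set (Euc d)) (φ : Euc d → ℝ) : Prop :=
  ContDiff ℝ (⊤ : ℕ∞) φ ∧ HasCompactSupport φ ∧ tsupport φ ⊆ Ω

/-- `G` is the weak (distributional) gradient of `u` on `Ω`. -/
def IsWeakGradOn {d : ℕ} (Ω : Set (Euc d)) (u : Euc d → ℝ) (G : Euc d → Euc d) : Prop :=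
  ∀ φ : Euc d → ℝ, TestFun Ω φ →
    (∫ x in Ω, u x • gradient φ x) = -∫ x in Ω, φ x • G x

/-- `u ∈ W^{1,p}_0(ω,Ω)`, with weak gradient `G`: both `u` and `G` belong to `L^p(ω,Ω)`,
`G` is the weak gradient of `u` on `Ω`, and `u` lies in the closure of the test functions
in the `W^{1,p}(ω,Ω)` norm. -/
def MemW1p0 {d : ℕ} (p : ℝ) (ω : Euc d → ℝ) (Ω : Set (Euc d))
    (u : Euc d → ℝ) (G : Euc d → Euc d) : Prop :=
  MemWLp p ω Ω u ∧ MemWLpV p ω Ω G ∧ IsWeakGradOn Ω u G ∧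
  ∀ ε : ℝ, 0 < ε → ∃ φ : Euc d → ℝ, TestFun Ω φ ∧
    wNorm p ω Ω (fun x => u x - φ x) + wNormV p ω Ω (fun x => G x - gradient φ x) < ε

/-- The `W^{-1,p}(ω,Ω)` norm of a functional `F` on test functions: the supremum of `F φ` over
test functions `φ` whose gradient has `L^{p'}(ω',Ω)` norm at most one, where `p'` is the
conjugate exponent and `ω' = ω^{-1/(p-1)}` the dual weight. -/
def dualNorm {d : ℕ} (p : ℝ) (ω : Euc d → ℝ) (Ω : Set (Euc d)) (F : (Euc d → ℝ) → ℝ) : ℝ :=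
  sSup {c : ℝ | ∃ φ : Euc d → ℝ, TestFun Ω φ ∧
    wNormV (p / (p - 1)) (dualWeight p ω) Ω (fun x => gradient φ x) ≤ 1 ∧ c = F φ}

/-- `Ω ⊆ ℝ^d` is a bounded convex polytope (open). -/
def IsBoundedConvexPolytope {d : ℕ} (Ω : Set (Euc d)) : Prop :=
  IsOpen Ω ∧ Convex ℝ Ω ∧ Bornology.IsBounded Ω ∧ Ω.Nonempty ∧
    ∃ S : Finset (Euc d), closure Ω = convexHull ℝ (S : Set (Euc d))

/-! ### Weighted Lebesgue spaces over a general measure -/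

section Weighted

variable {X : Type*} [MeasurableSpace X] {μ : Measure X}
  {E F : Type*} [NormedAddCommGroup E] [NormedSpace ℝ E]
  [NormedAddCommGroup F] [NormedSpace ℝ F]

/-- The weighted norm `(∫ ‖f‖^p ρ dμ)^{1/p}`, the common generalization of `wNorm` and `wNormV`. -/
def wN (p : ℝ) (ρ : X → ℝ) (μ : Measure X) (f : X → E) : ℝ :=
  (∫ x, ‖f x‖ ^ p * ρ x ∂μ) ^ (1 / p)

/-- Membership in the weighted Lebesgue space normed by `wN`, the common generalization of
`MemWLp` and `MemWLpV`. -/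
def WMem (p : ℝ) (ρ : X → ℝ) (μ : Measure X) (f : X → E) : Prop :=
  AEStronglyMeasurable f μ ∧ Integrable (fun x => ‖f x‖ ^ p * ρ x) μ

lemma norm_rpow_smul {p r : ℝ} (hp : 1 < p) (hr : 0 < r) (y : E) :
    ‖r ^ (1 / p) • y‖ ^ p = ‖y‖ ^ p * r := by
  have h0 : 0 < p := by linarith
  rw [norm_smul, Real.norm_eq_abs, abs_of_pos (Real.rpow_pos_of_pos hr _),
    Real.mul_rpow (Real.rpow_pos_of_pos hr _).le (norm_nonneg _), ← Real.rpow_mul hr.le,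
    one_div_mul_cancel h0.ne', Real.rpow_one, mul_comm]

lemma ae_norm_rpow_smul {p : ℝ} {ρ : X → ℝ} (hp : 1 < p) (hρ : ∀ᵐ x ∂μ, 0 < ρ x) (f : X → E) :
    (fun x => ‖ρ x ^ (1 / p) • f x‖ ^ p) =ᵐ[μ] fun x => ‖f x‖ ^ p * ρ x := by
  filter_upwards [hρ] with x hx using norm_rpow_smul hp hx _

/-- Multiplication by `ρ^{1/p}` identifies the weighted space with the unweighted `L^p`. -/
lemma wMem_iff_memLp {p : ℝ} {ρ : X → ℝ} (hp : 1 < p) (hρm : AEMeasurable ρ μ)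
    (hρ : ∀ᵐ x ∂μ, 0 < ρ x) {f : X → E} (hf : AEStronglyMeasurable f μ) :
    WMem p ρ μ f ↔ MemLp (fun x => ρ x ^ (1 / p) • f x) (ENNReal.ofReal p) μ := by
  have h0 : 0 < p := by linarith
  have hm : AEStronglyMeasurable (fun x => ρ x ^ (1 / p) • f x) μ :=
    (hρm.pow_const _).aestronglyMeasurable.smul hf
  rw [← integrable_norm_rpow_iff hm (by simpa using h0) ENNReal.ofReal_ne_top,
    ENNReal.toReal_ofReal h0.le, integrable_congr (ae_norm_rpow_smul hp hρ f)]
  exact ⟨fun h => h.2, fun h => ⟨hf, h⟩⟩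

lemma wN_nonneg {E : Type*} [NormedAddCommGroup E] {p : ℝ} {ρ : X → ℝ} (hρ : ∀ᵐ x ∂μ, 0 < ρ x) (f : X → E) : 0 ≤ wN p ρ μ f := by
  apply Real.rpow_nonneg
  apply integral_nonneg_of_ae
  filter_upwards [hρ] with x hx
  have := hx.le
  simp only [Pi.zero_apply]
  positivity

lemma wN_eq_toReal {p : ℝ} {ρ : X → ℝ} (hp : 1 < p) (hρm : AEMeasurable ρ μ)
    (hρ : ∀ᵐ x ∂μ, 0 < ρ x) {f : X → E} (hf : WMem p ρ μ f) :
    wN p ρ μ f = (eLpNorm (fun x => ρ x ^ (1 / p) • f x) (ENNReal.ofReal p) μ).toReal := by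
  have h0 : 0 < p := by linarith
  have hL := (wMem_iff_memLp hp hρm hρ hf.1).1 hf
  rw [hL.eLpNorm_eq_integral_rpow_norm (by simpa using h0) ENNReal.ofReal_ne_top,
    ENNReal.toReal_ofReal h0.le, integral_congr_ae (ae_norm_rpow_smul hp hρ f),
    ENNReal.toReal_ofReal (by simpa only [wN, one_div] using! wN_nonneg hρ f), wN, one_div]

lemma WMem.sub {p : ℝ} {ρ : X → ℝ} (hp : 1 < p) (hρm : AEMeasurable ρ μ)
    (hρ : ∀ᵐ x ∂μ, 0 < ρ x) {f g : X → E} (hf : WMem p ρ μ f) (hg : WMem p ρ μ g) :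
    WMem p ρ μ (fun x => f x - g x) := by
  refine (wMem_iff_memLp (f := fun x => f x - g x) hp hρm hρ (hf.1.sub hg.1)).2 ?_
  simpa only [smul_sub] using!
    ((wMem_iff_memLp hp hρm hρ hf.1).1 hf).sub ((wMem_iff_memLp hp hρm hρ hg.1).1 hg)

/-- Minkowski's inequality in the form used for approximations `g` of `f`. -/
lemma wN_le_add_sub {p : ℝ} {ρ : X → ℝ} (hp : 1 < p) (hρm : AEMeasurable ρ μ)
    (hρ : ∀ᵐ x ∂μ, 0 < ρ x) {f g : X → E} (hf : WMem p ρ μ f) (hg : WMem p ρ μ g) :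
    wN p ρ μ g ≤ wN p ρ μ f + wN p ρ μ (fun x => f x - g x) := by
  have hs := hf.sub hp hρm hρ hg
  rw [wN_eq_toReal hp hρm hρ hf, wN_eq_toReal hp hρm hρ hg, wN_eq_toReal hp hρm hρ hs]
  have hfL := (wMem_iff_memLp hp hρm hρ hf.1).1 hf
  have hsL := (wMem_iff_memLp hp hρm hρ hs.1).1 hs
  rw [← ENNReal.toReal_add hfL.2.ne hsL.2.ne]
  apply ENNReal.toReal_mono (ENNReal.add_ne_top.2 ⟨hfL.2.ne, hsL.2.ne⟩)
  have : (fun x => ρ x ^ (1 / p) • g x) =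
      (fun x => ρ x ^ (1 / p) • f x) - fun x => ρ x ^ (1 / p) • (f x - g x) := by
    ext x; simp [smul_sub]
  rw [this]
  refine eLpNorm_sub_le hfL.1 hsL.1 ?_
  simpa using hp.le

/-- Hölder's inequality for dual weights: since `ω^{1/p} (ω')^{1/p'} = 1`, any pairing `T`
with `|T| ≤ M ‖f‖ ‖g‖` is bounded on `L^p(ω) × L^{p'}(ω')`. -/
lemma weighted_holder {p : ℝ} {ω : X → ℝ} (hp : 1 < p) (hωm : AEMeasurable ω μ)
    (hω : ∀ᵐ x ∂μ, 0 < ω x) {f : X → E} {g : X → F} (hf : WMem p ω μ f)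
    (hg : WMem (p / (p - 1)) (fun x => ω x ^ (-(1 / (p - 1)))) μ g) {T : X → ℝ} {M : ℝ}
    (hT : AEStronglyMeasurable T μ) (hM : 0 ≤ M) (hb : ∀ᵐ x ∂μ, |T x| ≤ M * (‖f x‖ * ‖g x‖)) :
    Integrable T μ ∧ |∫ x, T x ∂μ| ≤
      M * (wN p ω μ f * wN (p / (p - 1)) (fun x => ω x ^ (-(1 / (p - 1)))) μ g) := by
  have h0 : 0 < p := by linarith
  have h1 : 0 < p - 1 := by linarith
  have hq : 1 < p / (p - 1) := by rw [lt_div_iff₀ h1]; linarith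
  have hpq : p.HolderConjugate (p / (p - 1)) := Real.HolderConjugate.conjExponent hp
  have hσ : ∀ᵐ x ∂μ, 0 < ω x ^ (-(1 / (p - 1))) := by
    filter_upwards [hω] with x hx using Real.rpow_pos_of_pos hx _
  have hσm : AEMeasurable (fun x => ω x ^ (-(1 / (p - 1)))) μ := hωm.pow_const _
  have hfL := ((wMem_iff_memLp hp hωm hω hf.1).1 hf).norm
  have hgL := ((wMem_iff_memLp hq hσm hσ hg.1).1 hg).norm
  have hprod : (fun x => ‖ω x ^ (1 / p) • f x‖ *
      ‖(ω x ^ (-(1 / (p - 1)))) ^ (1 / (p / (p - 1))) • g x‖) =ᵐ[μ]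
      fun x => ‖f x‖ * ‖g x‖ := by
    filter_upwards [hω] with x hx
    have e : ω x ^ (1 / p) * (ω x ^ (-(1 / (p - 1)))) ^ (1 / (p / (p - 1))) = 1 := by
      rw [← Real.rpow_mul hx.le, ← Real.rpow_add hx]
      have : 1 / p + -(1 / (p - 1)) * (1 / (p / (p - 1))) = 0 := by field_simp; ring
      rw [this, Real.rpow_zero]
    rw [norm_smul, norm_smul, Real.norm_eq_abs, Real.norm_eq_abs,
      abs_of_pos (Real.rpow_pos_of_pos hx _),
      abs_of_pos (Real.rpow_pos_of_pos (Real.rpow_pos_of_pos hx _) _), mul_mul_mul_comm, e, one_mul]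
  have hint : Integrable (fun x => ‖f x‖ * ‖g x‖) μ := by
    rw [← integrable_congr hprod]
    have := hpq.ennrealOfReal
    exact hfL.integrable_mul hgL
  have hH := integral_mul_norm_le_Lp_mul_Lq hpq hfL hgL
  simp only [norm_norm] at hH
  rw [integral_congr_ae hprod, integral_congr_ae (ae_norm_rpow_smul hp hω f),
    integral_congr_ae (ae_norm_rpow_smul hq hσ g)] at hH
  have hTi : Integrable T μ := (hint.const_mul M).mono' hT hb
  refine ⟨hTi, (abs_integral_le_integral_abs).trans ?_⟩
  calc ∫ x, |T x| ∂μ ≤ ∫ x, M * (‖f x‖ * ‖g x‖) ∂μ :=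
        integral_mono_ae hTi.abs (hint.const_mul M) hb
    _ = M * ∫ x, ‖f x‖ * ‖g x‖ ∂μ := integral_const_mul _ _
    _ ≤ _ := mul_le_mul_of_nonneg_left hH hM

end Weighted

/-! ### Cut-offs and test functions -/

section Cutoff

variable {d : ℕ}

/-- Smooth cut-offs exhausting a bounded open set: with `θ` smooth and positive exactly on `Ω`,
take `χ k = s (k θ - 1)`, where `s` is the smooth transition from `0` to `1`. -/
lemma exists_cutoff {Ω : Set (Euc d)} (ho : IsOpen Ω) (hb : Bornology.IsBounded Ω) :
    ∃ χ : ℕ → Euc d → ℝ, (∀ k, TestFun Ω (χ k)) ∧ (∀ k x, 0 ≤ χ k x ∧ χ k x ≤ 1) ∧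
      (∀ K : Set (Euc d), IsCompact K → K ⊆ Ω → ∃ k, ∀ x ∈ K, χ k x = 1) ∧
      (∀ x ∈ Ω, Tendsto (fun k => χ k x) atTop (𝓝 1)) := by
  obtain ⟨θ, hsupp, hθ, hr⟩ := ho.exists_contDiff_support_eq (n := ⊤)
  have hθ0 : ∀ x, 0 ≤ θ x := fun x => (hr ⟨x, rfl⟩).1
  have hpos : ∀ x ∈ Ω, 0 < θ x := fun x hx =>
    lt_of_le_of_ne (hθ0 x) (Ne.symm (by rw [← hsupp] at hx; exact hx))
  refine ⟨fun k x => Real.smoothTransition (k * θ x - 1), fun k => ?_, fun k x =>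
    ⟨Real.smoothTransition.nonneg _, Real.smoothTransition.le_one _⟩, ?_, ?_⟩
  · have hts : tsupport (fun x => Real.smoothTransition (k * θ x - 1)) ⊆ Ω := by
      have hcl : IsClosed {x | 1 ≤ k * θ x} :=
        isClosed_le continuous_const (continuous_const.mul hθ.continuous)
      have h1 : tsupport (fun x => Real.smoothTransition (k * θ x - 1)) ⊆ {x | 1 ≤ k * θ x} := by
        refine closure_minimal (fun x hx => ?_) hcl
        by_contra hlt
        simp only [Set.mem_ofPred_eq, not_le] at hlt
        exact hx (Real.smoothTransition.zero_of_nonpos (by linarith))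
      refine h1.trans fun x hx => ?_
      rw [← hsupp]
      intro h0
      simp only [Set.mem_ofPred_eq, h0, mul_zero] at hx
      linarith
    refine ⟨Real.smoothTransition.contDiff.comp ((contDiff_const.mul hθ).sub contDiff_const), ?_,
      hts⟩
    exact Metric.isCompact_of_isClosed_isBounded (isClosed_tsupport _) (hb.subset hts)
  · intro K hK hKΩ
    rcases K.eq_empty_or_nonempty with rfl | hne
    · exact ⟨0, by simp⟩
    obtain ⟨x₀, hx₀, hmin⟩ := hK.exists_isMinOn hne hθ.continuous.continuousOn
    have hm := hpos x₀ (hKΩ hx₀)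
    obtain ⟨k, hk⟩ := exists_nat_ge (2 / θ x₀)
    refine ⟨k, fun x hx => Real.smoothTransition.one_of_one_le ?_⟩
    have h1 : θ x₀ ≤ θ x := hmin hx
    rw [div_le_iff₀ hm] at hk
    have : (k : ℝ) * θ x₀ ≤ k * θ x := mul_le_mul_of_nonneg_left h1 (Nat.cast_nonneg k)
    linarith
  · intro x hx
    have hm := hpos x hx
    refine tendsto_const_nhds.congr' ?_
    obtain ⟨k₀, hk₀⟩ := exists_nat_ge (2 / θ x)
    filter_upwards [eventually_ge_atTop k₀] with k hk
    refine (Real.smoothTransition.one_of_one_le ?_).symm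
    rw [div_le_iff₀ hm] at hk₀
    have : (k₀ : ℝ) * θ x ≤ k * θ x := mul_le_mul_of_nonneg_right (by exact_mod_cast hk) hm.le
    linarith

lemma wMem_of_tsupport_subset {E : Type*} [NormedAddCommGroup E]
    {Ω K : Set (Euc d)} {q : ℝ} (hq : 1 < q) {ρ : Euc d → ℝ} (hK : IsCompact K)
    (hρ : IntegrableOn ρ K) {f : Euc d → E} (hf : Continuous f) (hfK : tsupport f ⊆ K) :
    WMem q ρ (volume.restrict Ω) f := by
  refine ⟨hf.aestronglyMeasurable, ?_⟩
  have hc : Continuous fun x => ‖f x‖ ^ q := hf.norm.rpow_const fun x => Or.inr (by linarith)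
  have h1 : IntegrableOn (fun x => ‖f x‖ ^ q * ρ x) K :=
    hρ.continuousOn_mul hc.continuousOn hK
  rw [integrableOn_iff_integrable_of_support_subset] at h1
  · exact h1.restrict
  · intro x hx
    apply hfK
    apply subset_tsupport
    intro h0
    apply hx
    simp [h0, Real.zero_rpow (by linarith : q ≠ 0)]

lemma continuous_gradient {Ω : Set (Euc d)} {φ : Euc d → ℝ} (h : TestFun Ω φ) :
    Continuous (gradient φ) :=
  (InnerProductSpace.toDual ℝ (Euc d)).symm.continuous.comp (h.1.continuous_fderiv (by simp))

lemma tsupport_gradient_subset (φ : Euc d → ℝ) : tsupport (gradient φ) ⊆ tsupport φ := by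
  refine (closure_mono fun x hx => ?_).trans (tsupport_fderiv_subset ℝ (f := φ))
  intro h0
  apply hx
  simp [gradient, h0]

/-- Density of test functions in `L^q(σ)`, localized by a cut-off `χ`: it suffices that
`|χ|^q σ` is integrable, since then it is the density of a finite measure, in whose `L^q` the
smooth compactly supported functions `g` are dense; `χ g` is the required test function. -/
lemma exists_test_approx {Ω : Set (Euc d)} {q : ℝ} (hq : 1 < q) {σ : Euc d → ℝ}
    (hσ : ∀ᵐ x ∂volume.restrict Ω, 0 < σ x)
    {χ : Euc d → ℝ} (hχ : TestFun Ω χ) (hχ1 : ∀ x, 0 ≤ χ x ∧ χ x ≤ 1)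
    (hχσ : WMem q σ (volume.restrict Ω) χ) {f : Euc d → ℝ} (hf : WMem q σ (volume.restrict Ω) f)
    {ε : ℝ} (hε : 0 < ε) :
    ∃ Ψ, TestFun Ω Ψ ∧ wN q σ (volume.restrict Ω) (fun x => χ x * f x - Ψ x) ≤ ε := by
  have h0 : 0 < q := by linarith
  set μ := volume.restrict Ω with hμ
  let δ : Euc d → ENNReal := fun x => ENNReal.ofReal (‖χ x‖ ^ q * σ x)
  have hδm : AEMeasurable δ μ := hχσ.2.1.aemeasurable.ennreal_ofReal
  have hδt : ∀ᵐ x ∂μ, δ x < ⊤ := Eventually.of_forall fun x => ENNReal.ofReal_lt_top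
  have hδr : ∀ᵐ x ∂μ, (δ x).toReal = ‖χ x‖ ^ q * σ x := by
    filter_upwards [hσ] with x hx
    exact ENNReal.toReal_ofReal (mul_nonneg (by positivity) hx.le)
  have : IsFiniteMeasure (μ.withDensity δ) := isFiniteMeasure_withDensity_ofReal hχσ.2.2
  have hac := withDensity_absolutelyContinuous μ δ
  have hfL : MemLp f (ENNReal.ofReal q) (μ.withDensity δ) := by
    rw [← integrable_norm_rpow_iff (hf.1.mono_ac hac) (by simpa using h0) ENNReal.ofReal_ne_top,
      ENNReal.toReal_ofReal h0.le, integrable_withDensity_iff_integrable_smul₀' hδm hδt]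
    refine hf.2.mono' ?_ ?_
    · exact hδm.ennreal_toReal.aestronglyMeasurable.smul
        (hf.1.norm.aemeasurable.pow_const _).aestronglyMeasurable
    · filter_upwards [hσ, hδr] with x hx hδ
      have hx' := hx.le
      have hχq : ‖χ x‖ ^ q ≤ 1 := Real.rpow_le_one (norm_nonneg _)
        (by rw [Real.norm_eq_abs, abs_of_nonneg (hχ1 x).1]; exact (hχ1 x).2) h0.le
      rw [hδ, smul_eq_mul, Real.norm_eq_abs, abs_of_nonneg (by positivity)]
      calc ‖χ x‖ ^ q * σ x * ‖f x‖ ^ q ≤ 1 * σ x * ‖f x‖ ^ q := by gcongr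
        _ = ‖f x‖ ^ q * σ x := by ring
  obtain ⟨g, hgc, hgs, hg⟩ := hfL.exist_eLpNorm_sub_le ENNReal.ofReal_ne_top
    (by simpa using hq.le) hε
  have hgL : MemLp g (ENNReal.ofReal q) (μ.withDensity δ) :=
    hgs.continuous.memLp_of_hasCompactSupport hgc
  refine ⟨fun x => χ x * g x, ⟨hχ.1.mul hgs, hχ.2.1.mul_right, ?_⟩, ?_⟩
  · exact (tsupport_mul_subset_left).trans hχ.2.2
  · rw [(hfL.sub hgL).eLpNorm_eq_integral_rpow_norm (by simpa using h0) ENNReal.ofReal_ne_top,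
      ENNReal.ofReal_le_ofReal_iff hε.le, ENNReal.toReal_ofReal h0.le,
      integral_withDensity_eq_integral_toReal_smul₀ hδm hδt] at hg
    rw [wN, one_div]
    convert hg using 2
    refine integral_congr_ae ?_
    filter_upwards [hδr] with x hx
    rw [hx, ← mul_sub, norm_mul, Real.mul_rpow (norm_nonneg _) (norm_nonneg _), smul_eq_mul,
      Pi.sub_apply]
    ring

end Cutoff

lemma le_of_forall_eps {a b C : ℝ} (hC : 0 ≤ C) (h : ∀ ε : ℝ, 0 < ε → a ≤ b + C * ε) : a ≤ b := by
  refine le_of_forall_pos_le_add fun ε hε => ?_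
  have h1 := h (ε / (C + 1)) (by positivity)
  have : C * (ε / (C + 1)) ≤ ε := by
    rw [mul_div_assoc', div_le_iff₀ (by positivity)]
    nlinarith
  linarith

/-! ### Duality of the weighted norms -/

section Duality

variable {d : ℕ}

/-- The extremal function `v |v|^{p-2} ω` in Hölder's inequality. -/
lemma extremal_pointwise {p r t : ℝ} (hp : 1 < p) (hr : 0 < r) :
    ‖t * |t| ^ (p - 2) * r‖ ^ (p / (p - 1)) * r ^ (-(1 / (p - 1))) = ‖t‖ ^ p * r ∧
      t * (t * |t| ^ (p - 2) * r) = ‖t‖ ^ p * r := by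
  have h0 : 0 < p := by linarith
  have h1 : 0 < p - 1 := by linarith
  have hq : 0 < p / (p - 1) := by positivity
  rcases eq_or_ne t 0 with rfl | ht
  · simp [Real.zero_rpow h0.ne', Real.zero_rpow hq.ne']
  have ht' : 0 < |t| := abs_pos.2 ht
  have e1 : ‖t * |t| ^ (p - 2) * r‖ = |t| ^ (p - 1) * r := by
    rw [norm_mul, norm_mul, Real.norm_eq_abs, Real.norm_eq_abs, Real.norm_eq_abs,
      abs_of_pos hr, abs_of_pos (Real.rpow_pos_of_pos ht' _)]
    nth_rewrite 1 [← Real.rpow_one |t|]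
    rw [← Real.rpow_add ht']
    ring_nf
  constructor
  · rw [e1, Real.mul_rpow (by positivity) hr.le, ← Real.rpow_mul ht'.le,
      mul_div_cancel₀ _ h1.ne', mul_assoc, ← Real.rpow_add hr, Real.norm_eq_abs]
    have : p / (p - 1) + -(1 / (p - 1)) = 1 := by field_simp; ring
    rw [this, Real.rpow_one]
  · have : t * (t * |t| ^ (p - 2) * r) = |t| ^ (2 : ℝ) * |t| ^ (p - 2) * r := by
      rw [Real.rpow_two, sq_abs]; ring
    rw [this, ← Real.rpow_add ht', Real.norm_eq_abs]
    ring_nf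

/-- The `L^p(ω)` norm is controlled by testing against smooth functions only. No integrability of
`ω' = ω^{-1/(p-1)}` up to the boundary is needed, only that test functions lie in `L^{p'}(ω')`. -/
lemma wN_le_of_forall_test {Ω : Set (Euc d)} (ho : IsOpen Ω) (hb : Bornology.IsBounded Ω)
    {p : ℝ} (hp : 1 < p) {ω : Euc d → ℝ} (hωm : AEMeasurable ω (volume.restrict Ω))
    (hω : ∀ᵐ x ∂volume.restrict Ω, 0 < ω x) {v : Euc d → ℝ} (hv : WMem p ω (volume.restrict Ω) v)
    {C : ℝ} (hC : 0 ≤ C)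
    (hmem : ∀ Ψ : Euc d → ℝ, TestFun Ω Ψ →
      WMem (p / (p - 1)) (fun x => ω x ^ (-(1 / (p - 1)))) (volume.restrict Ω) Ψ)
    (hbd : ∀ Ψ : Euc d → ℝ, TestFun Ω Ψ → ∫ x in Ω, v x * Ψ x ≤
      C * wN (p / (p - 1)) (fun x => ω x ^ (-(1 / (p - 1)))) (volume.restrict Ω) Ψ) :
    wN p ω (volume.restrict Ω) v ≤ C := by
  have h0 : 0 < p := by linarith
  have h1 : 0 < p - 1 := by linarith
  have hq : 1 < p / (p - 1) := by rw [lt_div_iff₀ h1]; linarith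
  have hq0 : 0 < p / (p - 1) := by linarith
  set μ := volume.restrict Ω with hμ
  set q := p / (p - 1) with hqdef
  set σ : Euc d → ℝ := fun x => ω x ^ (-(1 / (p - 1))) with hσdef
  have hσ : ∀ᵐ x ∂μ, 0 < σ x := by
    filter_upwards [hω] with x hx using Real.rpow_pos_of_pos hx _
  have hσm : AEMeasurable σ μ := hωm.pow_const _
  let f : Euc d → ℝ := fun x => v x * |v x| ^ (p - 2) * ω x
  have hfq : (fun x => ‖f x‖ ^ q * σ x) =ᵐ[μ] fun x => ‖v x‖ ^ p * ω x := by
    filter_upwards [hω] with x hx using (extremal_pointwise hp hx).1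
  have hfm : AEStronglyMeasurable f μ :=
    (hv.1.mul (hv.1.norm.aemeasurable.pow_const _).aestronglyMeasurable).mul
      hωm.aestronglyMeasurable
  have hf : WMem q σ μ f := ⟨hfm, hv.2.congr hfq.symm⟩
  set I : ℝ := ∫ x, ‖v x‖ ^ p * ω x ∂μ with hI
  have hI0 : 0 ≤ I := by
    apply integral_nonneg_of_ae
    filter_upwards [hω] with x hx
    have := hx.le
    simp only [Pi.zero_apply]
    positivity
  have hfN : wN q σ μ f = I ^ (1 / q) := by rw [wN, integral_congr_ae hfq]
  obtain ⟨χ, hχ, hχ1, -, hχlim⟩ := exists_cutoff ho hb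
  have hχf : ∀ k, WMem q σ μ (fun x => χ k x * f x) ∧
      wN q σ μ (fun x => χ k x * f x) ≤ wN q σ μ f := by
    intro k
    have hle : ∀ᵐ x ∂μ, ‖χ k x * f x‖ ^ q * σ x ≤ ‖f x‖ ^ q * σ x := by
      filter_upwards [hσ] with x hx
      have hx' := hx.le
      have : ‖χ k x * f x‖ ≤ ‖f x‖ := by
        rw [norm_mul, Real.norm_eq_abs, abs_of_nonneg (hχ1 k x).1]
        exact mul_le_of_le_one_left (norm_nonneg _) (hχ1 k x).2
      gcongr
    have hnn : ∀ᵐ x ∂μ, 0 ≤ ‖χ k x * f x‖ ^ q * σ x := by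
      filter_upwards [hσ] with x hx
      have hx' := hx.le
      positivity
    have hm : AEStronglyMeasurable (fun x => χ k x * f x) μ :=
      (hχ k).1.continuous.aestronglyMeasurable.mul hfm
    have hi : Integrable (fun x => ‖χ k x * f x‖ ^ q * σ x) μ := by
      refine hf.2.mono' ((hm.norm.aemeasurable.pow_const _).mul hσm).aestronglyMeasurable ?_
      filter_upwards [hle, hnn] with x hx hx'
      rwa [Real.norm_eq_abs, abs_of_nonneg hx']
    exact ⟨⟨hm, hi⟩, Real.rpow_le_rpow (integral_nonneg_of_ae hnn)
      (integral_mono_ae hi hf.2 hle) (by positivity)⟩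
  have hk : ∀ k, ∫ x, χ k x * (‖v x‖ ^ p * ω x) ∂μ ≤ C * I ^ (1 / q) := by
    intro k
    have hV : 0 ≤ wN p ω μ v := wN_nonneg hω v
    refine le_of_forall_eps (C := C + wN p ω μ v) (by positivity) fun ε hε => ?_
    obtain ⟨Ψ, hΨ, hΨε⟩ := exists_test_approx hq hσ (hχ k) (hχ1 k) (hmem _ (hχ k)) hf hε
    have hΨm := hmem Ψ hΨ
    have hdiff := (hχf k).1.sub hq hσm hσ hΨm
    have hH1 := weighted_holder (T := fun x => v x * Ψ x) (M := 1) hp hωm hω hv hΨm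
      (hv.1.mul hΨm.1) zero_le_one (Eventually.of_forall fun x => by simp [abs_mul])
    have hH2 := weighted_holder (T := fun x => v x * (χ k x * f x - Ψ x)) (M := 1) hp hωm hω hv
      hdiff (hv.1.mul hdiff.1) zero_le_one (Eventually.of_forall fun x => by simp [abs_mul])
    have heq : ∫ x, χ k x * (‖v x‖ ^ p * ω x) ∂μ =
        ∫ x, v x * Ψ x ∂μ + ∫ x, v x * (χ k x * f x - Ψ x) ∂μ := by
      rw [← integral_add hH1.1 hH2.1]
      refine integral_congr_ae ?_
      filter_upwards [hω] with x hx
      have := (extremal_pointwise (t := v x) hp hx).2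
      rw [← this]
      ring
    have hΨN := wN_le_add_sub hq hσm hσ (hχf k).1 hΨm
    have hN := (hχf k).2
    rw [hfN] at hN
    have hA : ∫ x, v x * Ψ x ∂μ ≤ C * (I ^ (1 / q) + ε) :=
      (hbd Ψ hΨ).trans (mul_le_mul_of_nonneg_left (by linarith) hC)
    have hB : ∫ x, v x * (χ k x * f x - Ψ x) ∂μ ≤ wN p ω μ v * ε := by
      refine (le_abs_self _).trans (hH2.2.trans ?_)
      rw [one_mul]
      exact mul_le_mul_of_nonneg_left hΨε hV
    rw [heq]
    linarith
  have hlim : Tendsto (fun k => ∫ x, χ k x * (‖v x‖ ^ p * ω x) ∂μ) atTop (𝓝 I) := by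
    refine tendsto_integral_of_dominated_convergence (fun x => ‖v x‖ ^ p * ω x)
      (fun k => (hχ k).1.continuous.aestronglyMeasurable.mul hv.2.1) hv.2 (fun k => ?_) ?_
    · filter_upwards [hω] with x hx
      have hx' := hx.le
      rw [norm_mul, Real.norm_eq_abs, abs_of_nonneg (hχ1 k x).1, Real.norm_eq_abs,
        abs_of_nonneg (by positivity)]
      exact mul_le_of_le_one_left (by positivity) (hχ1 k x).2
    · filter_upwards [ae_restrict_mem ho.measurableSet] with x hx
      simpa using (hχlim x hx).mul_const (‖v x‖ ^ p * ω x)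
  have hfinal : I ≤ C * I ^ (1 / q) := le_of_tendsto' hlim hk
  change I ^ (1 / p) ≤ C
  rcases hI0.eq_or_lt with h | h
  · rw [← h, Real.zero_rpow (by positivity)]; exact hC
  · have hIq : 0 < I ^ (1 / q) := Real.rpow_pos_of_pos h _
    refine le_of_mul_le_mul_right ?_ hIq
    rw [← Real.rpow_add h]
    have : 1 / p + 1 / q = 1 := by rw [hqdef]; field_simp; ring
    rwa [this, Real.rpow_one]

end Duality

/-! ### The adjoint problem -/

section Adjoint

variable {d : ℕ}

/-- Solvability of the adjoint problem forces every test function into `L^q(σ)`. If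
`|Ψ|^q σ` were not integrable, the right-hand side of the a priori bound would be the junk value
`0`, so `∇w = 0` and `∫ Ψ² = 0`. -/
lemma integrable_of_adjoint {Ω : Set (Euc d)} {q : ℝ} (hq : 1 < q) {σ : Euc d → ℝ}
    (hσ : ∀ᵐ x ∂volume.restrict Ω, 0 < σ x) {B : Euc d → Euc d →L[ℝ] Euc d} {C₀ : ℝ}
    {Ψ : Euc d → ℝ} (hΨ : TestFun Ω Ψ) {Gw : Euc d → Euc d}
    (hGw : WMem q σ (volume.restrict Ω) Gw)
    (heq : ∫ x in Ω, ⟪B x (Gw x), gradient Ψ x⟫ = ∫ x in Ω, Ψ x * Ψ x)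
    (hle : wN q σ (volume.restrict Ω) Gw ≤ C₀ * wN q σ (volume.restrict Ω) Ψ) :
    WMem q σ (volume.restrict Ω) Ψ := by
  have h0 : 0 < q := by linarith
  refine ⟨hΨ.1.continuous.aestronglyMeasurable, ?_⟩
  by_contra hni
  have hz : wN q σ (volume.restrict Ω) Ψ = 0 := by
    rw [wN, integral_undef hni, Real.zero_rpow (by positivity)]
  rw [hz, mul_zero] at hle
  have hnn : 0 ≤ᵐ[volume.restrict Ω] fun x => ‖Gw x‖ ^ q * σ x := by
    filter_upwards [hσ] with x hx
    have := hx.le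
    simp only [Pi.zero_apply]
    positivity
  have hG0 : wN q σ (volume.restrict Ω) Gw = 0 := le_antisymm hle (wN_nonneg hσ _)
  rw [wN, Real.rpow_eq_zero (integral_nonneg_of_ae hnn) (by positivity),
    integral_eq_zero_iff_of_nonneg_ae hnn hGw.2] at hG0
  have hGz : ∀ᵐ x ∂volume.restrict Ω, Gw x = 0 := by
    filter_upwards [hG0, hσ] with x hx hσx
    have hx' : ‖Gw x‖ ^ q = 0 := (mul_eq_zero.1 hx).resolve_right hσx.ne'
    rwa [Real.rpow_eq_zero (norm_nonneg _) h0.ne', norm_eq_zero] at hx'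
  have hl : ∫ x in Ω, ⟪B x (Gw x), gradient Ψ x⟫ = 0 := by
    refine integral_eq_zero_of_ae ?_
    filter_upwards [hGz] with x hx
    simp [hx]
  have hint : Integrable (fun x => Ψ x * Ψ x) (volume.restrict Ω) :=
    ((hΨ.1.continuous.mul hΨ.1.continuous).integrable_of_hasCompactSupport
      hΨ.2.1.mul_right).restrict
  rw [hl, eq_comm, integral_eq_zero_iff_of_nonneg (fun x => mul_self_nonneg _) hint] at heq
  apply hni
  refine (integrable_zero _ _ _).congr ?_
  filter_upwards [heq] with x hx
  simp [Real.zero_rpow h0.ne', mul_self_eq_zero.1 hx]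

/-- The dual norm bounds `Φ φ` by the norm of `∇φ`, provided `Φ` is homogeneous on test functions
and bounded. -/
lemma le_dualNorm_mul {Ω : Set (Euc d)} {p : ℝ} (hp : 1 < p) {ω : Euc d → ℝ}
    (hω : ∀ᵐ x ∂volume.restrict Ω, 0 < ω x) {Φ : (Euc d → ℝ) → ℝ} {c : ℝ}
    (hc : ∀ φ : Euc d → ℝ, TestFun Ω φ →
      |Φ φ| ≤ c * wNormV (p / (p - 1)) (dualWeight p ω) Ω (fun x => gradient φ x))
    (hhom : ∀ (t : ℝ) (φ : Euc d → ℝ), TestFun Ω φ → Φ (fun x => t * φ x) = t * Φ φ) :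
    0 ≤ dualNorm p ω Ω Φ ∧ ∀ φ : Euc d → ℝ, TestFun Ω φ →
      Φ φ ≤ dualNorm p ω Ω Φ *
        wNormV (p / (p - 1)) (dualWeight p ω) Ω (fun x => gradient φ x) := by
  have h1 : 0 < p - 1 := by linarith
  have hq : 0 < p / (p - 1) := div_pos (by linarith) h1
  have hσ : ∀ᵐ x ∂volume.restrict Ω, 0 < dualWeight p ω x := by
    filter_upwards [hω] with x hx using Real.rpow_pos_of_pos hx _
  have hNnn : ∀ F : Euc d → Euc d, 0 ≤ wNormV (p / (p - 1)) (dualWeight p ω) Ω F :=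
    fun F => wN_nonneg hσ F
  have hscale : ∀ (t : ℝ) (φ : Euc d → ℝ), 0 ≤ t → TestFun Ω φ →
      wNormV (p / (p - 1)) (dualWeight p ω) Ω (fun x => gradient (fun y => t * φ y) x) =
        t * wNormV (p / (p - 1)) (dualWeight p ω) Ω (fun x => gradient φ x) := by
    intro t φ ht hφ
    have hg : ∀ x, gradient (fun y => t * φ y) x = t • gradient φ x := by
      intro x
      have hd : DifferentiableAt ℝ φ x := hφ.1.differentiable (by simp) x
      simp only [gradient]
      rw [fderiv_const_mul hd]
      simp
    have hsplit : ∀ x, ‖gradient (fun y => t * φ y) x‖ ^ (p / (p - 1)) * dualWeight p ω x =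
        t ^ (p / (p - 1)) * (‖gradient φ x‖ ^ (p / (p - 1)) * dualWeight p ω x) := by
      intro x
      rw [hg, norm_smul, Real.norm_eq_abs, abs_of_nonneg ht, Real.mul_rpow ht (norm_nonneg _),
        mul_assoc]
    have hInn : 0 ≤ ∫ x in Ω, ‖gradient φ x‖ ^ (p / (p - 1)) * dualWeight p ω x := by
      apply integral_nonneg_of_ae
      filter_upwards [hσ] with x hx
      have := hx.le
      simp only [Pi.zero_apply]
      positivity
    simp only [wNormV, hsplit]
    rw [integral_const_mul, Real.mul_rpow (by positivity) hInn, ← Real.rpow_mul ht,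
      mul_one_div_cancel hq.ne', Real.rpow_one]
  have htest : ∀ (t : ℝ) (φ : Euc d → ℝ), TestFun Ω φ → TestFun Ω (fun x => t * φ x) :=
    fun t φ hφ => ⟨contDiff_const.mul hφ.1, hφ.2.1.mul_left,
      (tsupport_mul_subset_right (f := fun _ => t)).trans hφ.2.2⟩
  have hbdd : BddAbove {c : ℝ | ∃ φ : Euc d → ℝ, TestFun Ω φ ∧
      wNormV (p / (p - 1)) (dualWeight p ω) Ω (fun x => gradient φ x) ≤ 1 ∧ c = Φ φ} := by
    refine ⟨|c|, ?_⟩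
    rintro _ ⟨φ, hφ, hN, rfl⟩
    calc Φ φ ≤ |Φ φ| := le_abs_self _
      _ ≤ c * wNormV (p / (p - 1)) (dualWeight p ω) Ω (fun x => gradient φ x) := hc φ hφ
      _ ≤ |c| * 1 := mul_le_mul (le_abs_self c) hN (hNnn _) (abs_nonneg c)
      _ = |c| := mul_one _
  have hz : TestFun Ω (fun _ => (0 : ℝ)) :=
    ⟨contDiff_const, HasCompactSupport.zero, by simp [tsupport]⟩
  have hΦz : Φ (fun _ => (0 : ℝ)) = 0 := by simpa using hhom 0 _ hz
  have hNz : wNormV (p / (p - 1)) (dualWeight p ω) Ω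
      (fun x => gradient (fun _ : Euc d => (0 : ℝ)) x) = 0 := by
    simpa using hscale 0 _ le_rfl hz
  refine ⟨le_csSup hbdd ⟨_, hz, by rw [hNz]; exact zero_le_one, hΦz.symm⟩, fun φ hφ => ?_⟩
  rcases (hNnn (fun x => gradient φ x)).eq_or_lt with h | h
  · have := hc φ hφ
    rw [← h, mul_zero] at this ⊢
    exact (le_abs_self _).trans this
  · rw [← div_le_iff₀ h]
    refine le_csSup hbdd ⟨_, htest (wNormV (p / (p - 1)) (dualWeight p ω) Ω
      (fun x => gradient φ x))⁻¹ φ hφ, ?_, ?_⟩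
    · rw [hscale _ _ (inv_nonneg.2 h.le) hφ, inv_mul_cancel₀ h.ne']
    · rw [hhom _ _ hφ, div_eq_inv_mul]

end Adjoint

/-- duality argument. Let `d ∈ {2,3}`, `Ω ⊆ ℝ^d` a bounded convex polytope,
`p ∈ (1,∞)`, `ω ∈ A_p`, with conjugate exponent `p' = p/(p-1)` and dual weight
`ω' = ω^{-1/(p-1)}`. Let `B` be a smooth symmetric-valued coefficient with `αI ⪯ B(x)` on `Ω̄`.
Suppose `C₀ > 0` is such that for every test function `Ψ` the (adjoint) problem
`-div(B∇w) = Ψ` has a solution `w ∈ W^{1,p'}_0(ω',Ω)` with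
`‖∇w‖_{L^{p'}(ω',Ω)} ≤ C₀ ‖Ψ‖_{L^{p'}(ω',Ω)}`. Then every `v ∈ W^{1,p}_0(ω,Ω)` with
`-div(B∇v) = Φ` in `𝒟'(Ω)` for some `Φ ∈ W^{-1,p}(ω,Ω)` satisfies
`‖v‖_{L^p(ω,Ω)} ≤ C₀ ‖Φ‖_{W^{-1,p}(ω,Ω)}`. -/
theorem duality_Lp_bound_from_adjoint_solvability
    (d : ℕ) (hd : d = 2 ∨ d = 3)
    (Ω : Set (Euc d)) (hΩ : IsBoundedConvexPolytope Ω)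
    (p : ℝ) (hp : 1 < p) (ω : Euc d → ℝ) (hω : IsAp p ω)
    (B : Euc d → Euc d →L[ℝ] Euc d) (α : ℝ) (hα : 0 < α)
    (hBsmooth : ContDiffOn ℝ (⊤ : ℕ∞) B (closure Ω))
    (hBsymm : ∀ x ∈ closure Ω, ∀ v w : Euc d, ⟪B x v, w⟫ = ⟪v, B x w⟫)
    (hBlow : ∀ x ∈ closure Ω, ∀ v : Euc d, α * ‖v‖ ^ 2 ≤ ⟪B x v, v⟫)
    (C₀ : ℝ) (hC₀ : 0 < C₀)
    (hadj : ∀ Ψ : Euc d → ℝ, TestFun Ω Ψ →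
      ∃ (w : Euc d → ℝ) (Gw : Euc d → Euc d),
        MemW1p0 (p / (p - 1)) (dualWeight p ω) Ω w Gw ∧
        (∀ φ : Euc d → ℝ, TestFun Ω φ →
          (∫ x in Ω, ⟪B x (Gw x), gradient φ x⟫) = ∫ x in Ω, Ψ x * φ x) ∧
        wNormV (p / (p - 1)) (dualWeight p ω) Ω Gw ≤
          C₀ * wNorm (p / (p - 1)) (dualWeight p ω) Ω Ψ) :
    ∀ (v : Euc d → ℝ) (Gv : Euc d → Euc d), MemW1p0 p ω Ω v Gv →
    ∀ Φ : (Euc d → ℝ) → ℝ,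
      (∃ c : ℝ, ∀ φ : Euc d → ℝ, TestFun Ω φ →
        |Φ φ| ≤ c * wNormV (p / (p - 1)) (dualWeight p ω) Ω (fun x => gradient φ x)) →
      (∀ φ : Euc d → ℝ, TestFun Ω φ →
        (∫ x in Ω, ⟪B x (Gv x), gradient φ x⟫) = Φ φ) →
      wNorm p ω Ω v ≤ C₀ * dualNorm p ω Ω Φ := by
  have h1 : 0 < p - 1 := by linarith
  have hq : 1 < p / (p - 1) := by rw [lt_div_iff₀ h1]; linarith
  obtain ⟨ho, -, hb, -, -⟩ := hΩ
  obtain ⟨⟨hωloc, hωpos⟩, -⟩ := hω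
  have hω0 : ∀ᵐ x ∂volume.restrict Ω, 0 < ω x := ae_restrict_of_ae hωpos
  have hωm : AEMeasurable ω (volume.restrict Ω) :=
    hωloc.aestronglyMeasurable.aemeasurable.restrict
  have hσ0 : ∀ᵐ x ∂volume.restrict Ω, 0 < dualWeight p ω x := by
    filter_upwards [hω0] with x hx using Real.rpow_pos_of_pos hx _
  have hσm : AEMeasurable (dualWeight p ω) (volume.restrict Ω) := hωm.pow_const _
  obtain ⟨M, hM0, hM⟩ : ∃ M : ℝ, 0 ≤ M ∧ ∀ x ∈ Ω, ‖B x‖ ≤ M := by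
    obtain ⟨M, hM⟩ := hb.isCompact_closure.exists_bound_of_continuousOn hBsmooth.continuousOn
    exact ⟨max M 0, le_max_right _ _, fun x hx => (hM x (subset_closure hx)).trans (le_max_left _ _)⟩
  have hBm : AEStronglyMeasurable B (volume.restrict Ω) :=
    (hBsmooth.continuousOn.mono subset_closure).aestronglyMeasurable ho.measurableSet
  have hBF : ∀ F : Euc d → Euc d, AEStronglyMeasurable F (volume.restrict Ω) →
      AEStronglyMeasurable (fun x => B x (F x)) (volume.restrict Ω) := fun F hF =>
    isBoundedBilinearMap_apply.continuous.comp_aestronglyMeasurable (hBm.prodMk hF)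
  have hbd : ∀ F G : Euc d → Euc d, ∀ᵐ x ∂volume.restrict Ω,
      |⟪B x (F x), G x⟫| ≤ M * (‖F x‖ * ‖G x‖) := by
    intro F G
    filter_upwards [ae_restrict_mem ho.measurableSet] with x hx
    calc |⟪B x (F x), G x⟫| ≤ ‖B x (F x)‖ * ‖G x‖ := abs_real_inner_le_norm _ _
      _ ≤ (M * ‖F x‖) * ‖G x‖ := by
          gcongr
          exact ((B x).le_opNorm _).trans (by gcongr; exact hM x hx)
      _ = _ := by ring
  -- Test functions and their gradients lie in both weighted spaces.
  have hΨσ : ∀ Ψ : Euc d → ℝ, TestFun Ω Ψ →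
      WMem (p / (p - 1)) (dualWeight p ω) (volume.restrict Ω) Ψ := by
    intro Ψ hΨ
    obtain ⟨w, Gw, hw, heq, hle⟩ := hadj Ψ hΨ
    exact integrable_of_adjoint hq hσ0 hΨ hw.2.1 (heq Ψ hΨ) hle
  have hσloc : ∀ K : Set (Euc d), IsCompact K → K ⊆ Ω → IntegrableOn (dualWeight p ω) K := by
    intro K hK hKΩ
    obtain ⟨χ, hχ, -, hχK, -⟩ := exists_cutoff ho hb
    obtain ⟨k, hk⟩ := hχK K hK hKΩ
    have hi : IntegrableOn (fun x => ‖χ k x‖ ^ (p / (p - 1)) * dualWeight p ω x) K :=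
      IntegrableOn.mono_set (hΨσ _ (hχ k)).2 hKΩ
    refine hi.congr_fun (fun x hx => ?_) hK.measurableSet
    simp [hk x hx]
  have hgσ : ∀ φ : Euc d → ℝ, TestFun Ω φ →
      WMem (p / (p - 1)) (dualWeight p ω) (volume.restrict Ω) (gradient φ) := fun φ hφ =>
    wMem_of_tsupport_subset hq hφ.2.1 (hσloc _ hφ.2.1 hφ.2.2) (continuous_gradient hφ)
      (tsupport_gradient_subset φ)
  have hφω : ∀ φ : Euc d → ℝ, TestFun Ω φ → WMem p ω (volume.restrict Ω) φ := fun φ hφ =>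
    wMem_of_tsupport_subset hp hφ.2.1 (hωloc.integrableOn_isCompact hφ.2.1) hφ.1.continuous
      subset_rfl
  have hgω : ∀ φ : Euc d → ℝ, TestFun Ω φ → WMem p ω (volume.restrict Ω) (gradient φ) :=
    fun φ hφ => wMem_of_tsupport_subset hp hφ.2.1 (hωloc.integrableOn_isCompact hφ.2.1)
      (continuous_gradient hφ) (tsupport_gradient_subset φ)
  rintro v Gv ⟨hv, hGv, -, hvapp⟩ Φ ⟨c, hc⟩ hΦ
  have hv' : WMem p ω (volume.restrict Ω) v := hv
  have hGv' : WMem p ω (volume.restrict Ω) Gv := hGv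
  have hhom : ∀ (t : ℝ) (φ : Euc d → ℝ), TestFun Ω φ → Φ (fun x => t * φ x) = t * Φ φ := by
    intro t φ hφ
    have ht : TestFun Ω (fun x => t * φ x) := ⟨contDiff_const.mul hφ.1, hφ.2.1.mul_left,
      (tsupport_mul_subset_right (f := fun _ => t)).trans hφ.2.2⟩
    rw [← hΦ _ ht, ← hΦ φ hφ, ← integral_const_mul]
    congr 1
    ext x
    have hd : DifferentiableAt ℝ φ x := hφ.1.differentiable (by simp) x
    have hg : gradient (fun y => t * φ y) x = t • gradient φ x := by
      simp only [gradient]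
      rw [fderiv_const_mul hd]
      simp
    rw [hg, inner_smul_right]
  obtain ⟨hD0, hD⟩ := le_dualNorm_mul hp hω0 hc hhom
  refine wN_le_of_forall_test ho hb hp hωm hω0 hv (mul_nonneg hC₀.le hD0) hΨσ fun Ψ hΨ => ?_
  obtain ⟨w, Gw, ⟨-, hGw, -, hwapp⟩, hweq, hwle⟩ := hadj Ψ hΨ
  have hGw' : WMem (p / (p - 1)) (dualWeight p ω) (volume.restrict Ω) Gw := hGw
  have hΨm := hΨσ Ψ hΨ
  set μ := volume.restrict Ω with hμ
  -- The pairing `∫ BF·G` on `L^p(ω) × L^{p'}(ω')`.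
  have hpair : ∀ F G : Euc d → Euc d, WMem p ω μ F → WMem (p / (p - 1)) (dualWeight p ω) μ G →
      Integrable (fun x => ⟪B x (F x), G x⟫) μ ∧ |∫ x, ⟪B x (F x), G x⟫ ∂μ| ≤
        M * (wN p ω μ F * wN (p / (p - 1)) (dualWeight p ω) μ G) := fun F G hF hG =>
    weighted_holder hp hωm hω0 hF hG ((hBF F hF.1).inner hG.1) hM0 (hbd F G)
  have hsymm : ∀ F G : Euc d → Euc d,
      ∫ x, ⟪B x (G x), F x⟫ ∂μ = ∫ x, ⟪B x (F x), G x⟫ ∂μ := by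
    intro F G
    refine integral_congr_ae ?_
    filter_upwards [ae_restrict_mem ho.measurableSet] with x hx
    rw [hBsymm x (subset_closure hx), real_inner_comm]
  have hpv := hpair Gv Gw hGv hGw
  have hGwN := wN_nonneg (p := p / (p - 1)) hσ0 Gw
  have hGvN := wN_nonneg (p := p) hω0 Gv
  have hΨN := wN_nonneg (p := p / (p - 1)) hσ0 Ψ
  -- Testing the adjoint equation with approximations of `v`.
  have hstep1 : ∫ x, v x * Ψ x ∂μ ≤ ∫ x, ⟪B x (Gv x), Gw x⟫ ∂μ := by
    refine le_of_forall_eps (C := wN (p / (p - 1)) (dualWeight p ω) μ Ψ +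
      M * wN (p / (p - 1)) (dualWeight p ω) μ Gw) (by positivity) fun ε hε => ?_
    obtain ⟨φ, hφ, hφε⟩ := hvapp ε hε
    have hdv := hv'.sub hp hωm hω0 (hφω φ hφ)
    have hdG := hGv'.sub hp hωm hω0 (hgω φ hφ)
    have n1 := wN_nonneg (p := p) hω0 (fun x => v x - φ x)
    have n2 := wN_nonneg (p := p) hω0 (fun x => Gv x - gradient φ x)
    have hφε' : wN p ω μ (fun x => v x - φ x) + wN p ω μ (fun x => Gv x - gradient φ x) < ε := hφε
    have e1 := weighted_holder (T := fun x => (v x - φ x) * Ψ x) (M := 1) hp hωm hω0 hdv hΨm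
      (hdv.1.mul hΨm.1) zero_le_one (Eventually.of_forall fun x => by simp [abs_mul])
    have e2 := weighted_holder (T := fun x => φ x * Ψ x) (M := 1) hp hωm hω0 (hφω φ hφ) hΨm
      ((hφω φ hφ).1.mul hΨm.1) zero_le_one (Eventually.of_forall fun x => by simp [abs_mul])
    have e3 := hpair _ Gw hdG hGw
    have e4 := hpair _ Gw (hgω φ hφ) hGw
    have s1 : ∫ x, v x * Ψ x ∂μ = ∫ x, (v x - φ x) * Ψ x ∂μ + ∫ x, φ x * Ψ x ∂μ := by
      rw [← integral_add e1.1 e2.1]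
      congr 1; ext x; ring
    have s2 : ∫ x, ⟪B x (Gv x), Gw x⟫ ∂μ = ∫ x, ⟪B x (Gv x - gradient φ x), Gw x⟫ ∂μ +
        ∫ x, ⟪B x (gradient φ x), Gw x⟫ ∂μ := by
      rw [← integral_add e3.1 e4.1]
      congr 1; ext x; rw [← inner_add_left, ← map_add, sub_add_cancel]
    have s3 : ∫ x, φ x * Ψ x ∂μ = ∫ x, ⟪B x (gradient φ x), Gw x⟫ ∂μ := by
      rw [← hsymm, hweq φ hφ]
      congr 1; ext x; ring
    have b1 : ∫ x, (v x - φ x) * Ψ x ∂μ ≤ ε * wN (p / (p - 1)) (dualWeight p ω) μ Ψ := by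
      refine (le_abs_self _).trans (e1.2.trans ?_)
      rw [one_mul]
      exact mul_le_mul_of_nonneg_right (by linarith) hΨN
    have b2 : -∫ x, ⟪B x (Gv x - gradient φ x), Gw x⟫ ∂μ ≤
        M * (ε * wN (p / (p - 1)) (dualWeight p ω) μ Gw) := by
      refine (neg_le_abs _).trans (e3.2.trans ?_)
      exact mul_le_mul_of_nonneg_left (mul_le_mul_of_nonneg_right (by linarith) hGwN) hM0
    rw [s1, s2, s3]
    linarith
  -- Testing the equation for `v` with approximations of `w`.
  have hstep2 : ∫ x, ⟪B x (Gv x), Gw x⟫ ∂μ ≤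
      dualNorm p ω Ω Φ * wN (p / (p - 1)) (dualWeight p ω) μ Gw := by
    refine le_of_forall_eps (C := dualNorm p ω Ω Φ + M * wN p ω μ Gv) (by positivity)
      fun ε hε => ?_
    obtain ⟨ψ, hψ, hψε⟩ := hwapp ε hε
    have hdG := hGw'.sub hq hσm hσ0 (hgσ ψ hψ)
    have n1 := wN_nonneg (p := p / (p - 1)) hσ0 (fun x => w x - ψ x)
    have n2 := wN_nonneg (p := p / (p - 1)) hσ0 (fun x => Gw x - gradient ψ x)
    have hψε' : wN (p / (p - 1)) (dualWeight p ω) μ (fun x => w x - ψ x) +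
      wN (p / (p - 1)) (dualWeight p ω) μ (fun x => Gw x - gradient ψ x) < ε := hψε
    have e3 := hpair Gv _ hGv hdG
    have e4 := hpair Gv _ hGv (hgσ ψ hψ)
    have s2 : ∫ x, ⟪B x (Gv x), Gw x⟫ ∂μ = ∫ x, ⟪B x (Gv x), Gw x - gradient ψ x⟫ ∂μ +
        Φ ψ := by
      rw [← hΦ ψ hψ, ← integral_add e3.1 e4.1]
      congr 1; ext x; rw [← inner_add_right, sub_add_cancel]
    have b1 : Φ ψ ≤ dualNorm p ω Ω Φ * (wN (p / (p - 1)) (dualWeight p ω) μ Gw + ε) := by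
      refine (hD ψ hψ).trans (mul_le_mul_of_nonneg_left ?_ hD0)
      refine (wN_le_add_sub hq hσm hσ0 hGw (hgσ ψ hψ)).trans ?_
      linarith
    have b2 : ∫ x, ⟪B x (Gv x), Gw x - gradient ψ x⟫ ∂μ ≤ M * (wN p ω μ Gv * ε) := by
      refine (le_abs_self _).trans (e3.2.trans ?_)
      exact mul_le_mul_of_nonneg_left (mul_le_mul_of_nonneg_left (by linarith) hGvN) hM0
    rw [s2]
    linarith
  calc ∫ x, v x * Ψ x ∂μ
      ≤ dualNorm p ω Ω Φ * wN (p / (p - 1)) (dualWeight p ω) μ Gw := hstep1.trans hstep2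
    _ ≤ dualNorm p ω Ω Φ * (C₀ * wN (p / (p - 1)) (dualWeight p ω) μ Ψ) :=
        mul_le_mul_of_nonneg_left hwle hD0
    _ = C₀ * dualNorm p ω Ω Φ * wN (p / (p - 1)) (dualWeight p ω) μ Ψ := by ring
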